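/- If each of the sets T_1, …, T_k ⊆ S satisfies the SEC condition V(s) = bexit_V(T_i) for all s ∈ T_i, where V = lfp(B), then V is a fixpoint of the deflated Bellman operator B^D := deflate_{T_k} ∘ ⋯ ∘ deflate_{T_1} ∘ B, and consequently lfp(B^D) ≤ V. -/

import Mathlib

/-!
The Bellman operator `B` is monotone, so Knaster–Tarski gives `B V = V`. Deflating `T` replaces
`V` on `T` by `min V (bexit_V T)`, which is `V` again because `V` does not exceed the best exit
there. Hence every factor of `B^D` fixes `V`, and `lfp(B^D)` lies below each of its prefixpoints.
-/

noncomputable section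
open Classical Finset

instance : Fact ((0:ℝ) ≤ 1) := ⟨zero_le_one⟩

/-- A finite simple stochastic game: states are partitioned into Maximizer states
(`isMax`) and Minimizer states, each state has a nonempty finite set of available
actions, the transition function is a probability distribution for every available
action, and `F` is the set of goal states. -/
structure SSG (S A : Type) [Fintype S] [Nonempty S] [Fintype A] where
  isMax : S → Prop
  Av : S → Finset A
  avNonempty : ∀ s, (Av s).Nonempty
  tr : S → A → S → ℝ
  tr_nonneg : ∀ s a, a ∈ Av s → ∀ s', 0 ≤ tr s a s'
  tr_sum : ∀ s a, a ∈ Av s → ∑ s', tr s a s' = 1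
  F : Set S

variable {S A : Type} [Fintype S] [Nonempty S] [Fintype A]

/-- The expected value `Σ_{s'} δ(s,a,s')·f(s')` of `f` after playing `a` in `s`. -/
def SSG.sumR (G : SSG S A) (f : S → unitInterval) (s : S) (a : A) : ℝ :=
  ∑ s', G.tr s a s' * (f s' : ℝ)

lemma SSG.sumR_mem (G : SSG S A) (f : S → unitInterval) {s : S} {a : A} (ha : a ∈ G.Av s) :
    G.sumR f s a ∈ Set.Icc (0 : ℝ) 1 := by
  constructor
  · exact Finset.sum_nonneg fun s' _ => mul_nonneg (G.tr_nonneg s a ha s') (f s').2.1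
  · calc ∑ s', G.tr s a s' * (f s' : ℝ) ≤ ∑ s', G.tr s a s' * 1 := by
          refine Finset.sum_le_sum fun s' _ => ?_
          exact mul_le_mul_of_nonneg_left (f s').2.2 (G.tr_nonneg s a ha s')
    _ = 1 := by simpa using G.tr_sum s a ha

/-- The Bellman operator: `1` on goal states, the maximum over available actions at
Maximizer states, the minimum over available actions at Minimizer states.
Value functions are maps `S → [0,1]`, ordered pointwise. -/
noncomputable def SSG.bellman (G : SSG S A) (f : S → unitInterval) : S → unitInterval :=
  fun s =>
    if s ∈ G.F then 1
    else if G.isMax s then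
      (G.Av s).attach.sup' (Finset.attach_nonempty_iff.mpr (G.avNonempty s))
        (fun a => (⟨G.sumR f s a.1, G.sumR_mem f a.2⟩ : unitInterval))
    else
      (G.Av s).attach.inf' (Finset.attach_nonempty_iff.mpr (G.avNonempty s))
        (fun a => (⟨G.sumR f s a.1, G.sumR_mem f a.2⟩ : unitInterval))

/-- The Knaster–Tarski least fixpoint of an operator on a complete lattice. -/
def lfpOf {P : Type*} [CompleteLattice P] (Φ : P → P) : P := sInf {x | Φ x ≤ x}

/-- Exiting state-action pairs of `T`: a Maximizer state `s ∈ T` together with an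
available action `a` whose set of successors `Post(s,a) = {s' | δ(s,a,s') > 0}`
is not contained in `T`. -/
noncomputable def SSG.exits (G : SSG S A) (T : Set S) : Finset (S × A) :=
  Finset.univ.filter (fun p =>
    p.1 ∈ T ∧ G.isMax p.1 ∧ p.2 ∈ G.Av p.1 ∧ ¬ ({s' | 0 < G.tr p.1 p.2 s'} ⊆ T))

lemma SSG.exits_av (G : SSG S A) {T : Set S} {p : S × A} (hp : p ∈ G.exits T) :
    p.2 ∈ G.Av p.1 :=
  (Finset.mem_filter.mp hp).2.2.2.1

/-- The best exit from `T` according to `f`: the maximum of `Σ_{s'} δ(s,a,s')·f(s')`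
over all exiting state-action pairs of `T`, with the maximum over the empty set
defined to be `0`. -/
noncomputable def SSG.bexit (G : SSG S A) (T : Set S) (f : S → unitInterval) : unitInterval :=
  (G.exits T).attach.fold (· ⊔ ·) 0
    (fun p => (⟨G.sumR f p.1.1 p.1.2, G.sumR_mem f (G.exits_av p.2)⟩ : unitInterval))

/-- The deflate operator: on `T` it caps the estimate by the best exit of `T`,
outside of `T` it leaves the estimate unchanged. -/
noncomputable def SSG.deflate (G : SSG S A) (T : Set S) (f : S → unitInterval) :
    S → unitInterval :=
  fun s => if s ∈ T then min (f s) (G.bexit T f) else f s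

lemma map_lfpOf {P : Type*} [CompleteLattice P] {Φ : P → P} (hΦ : Monotone Φ) :
    Φ (lfpOf Φ) = lfpOf Φ :=
  OrderHom.map_lfp ⟨Φ, hΦ⟩

lemma lfpOf_le {P : Type*} [CompleteLattice P] {Φ : P → P} {x : P} (hx : Φ x ≤ x) :
    lfpOf Φ ≤ x :=
  sInf_le hx

namespace SSG

variable (G : SSG S A)

lemma sumR_mono {s : S} {a : A} (ha : a ∈ G.Av s) : Monotone fun f => G.sumR f s a :=
  fun _ _ hfg => Finset.sum_le_sum fun s' _ =>
    mul_le_mul_of_nonneg_left (hfg s') (G.tr_nonneg s a ha s')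

lemma bellman_mono : Monotone G.bellman := by
  intro f g hfg s
  unfold bellman
  split_ifs
  · exact le_rfl
  · exact Finset.sup'_mono_fun fun a _ => G.sumR_mono a.2 hfg
  · exact Finset.inf'_mono_fun fun a _ => G.sumR_mono a.2 hfg

lemma deflate_eq_self_iff {T : Set S} {f : S → unitInterval} :
    G.deflate T f = f ↔ ∀ s ∈ T, f s ≤ G.bexit T f := by
  simp only [funext_iff, deflate, ite_eq_right_iff, min_eq_left_iff]

lemma foldl_deflate_eq_self {Ts : List (Set S)} {f : S → unitInterval}
    (hf : ∀ T ∈ Ts, ∀ s ∈ T, f s ≤ G.bexit T f) :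
    Ts.foldl (fun g T => G.deflate T g) f = f := by
  refine List.foldlRecOn (motive := (· = f)) Ts _ rfl ?_
  rintro _ rfl T hT
  exact G.deflate_eq_self_iff.mpr (hf T hT)

theorem deflatedBellman_fixpoint_general {Ts : List (Set S)} {f : S → unitInterval}
    (hfix : G.bellman f = f) (hexit : ∀ T ∈ Ts, ∀ s ∈ T, f s ≤ G.bexit T f) :
    Ts.foldl (fun g T => G.deflate T g) (G.bellman f) = f ∧
      lfpOf (fun h : S → unitInterval =>
        Ts.foldl (fun g T => G.deflate T g) (G.bellman h)) ≤ f := by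
  have hfixD : Ts.foldl (fun g T => G.deflate T g) (G.bellman f) = f := by
    rw [hfix, G.foldl_deflate_eq_self hexit]
  exact ⟨hfixD, lfpOf_le hfixD.le⟩

end SSG

/-- If each `T_i` satisfies the SEC condition, then the value `V = lfp(B)` is a
fixpoint of the deflated Bellman operator `B^D = deflate_{T_k} ∘ ⋯ ∘ deflate_{T_1} ∘ B`,
and consequently `lfp(B^D) ≤ V`. -/
theorem SSG.deflatedBellman_fixpoint (G : SSG S A) (Ts : List (Set S))
    (hSEC : ∀ T ∈ Ts, ∀ s ∈ T, lfpOf G.bellman s = G.bexit T (lfpOf G.bellman)) :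
    Ts.foldl (fun g T => G.deflate T g) (G.bellman (lfpOf G.bellman)) = lfpOf G.bellman ∧
      lfpOf (fun f : S → unitInterval =>
        Ts.foldl (fun g T => G.deflate T g) (G.bellman f)) ≤ lfpOf G.bellman :=
  G.deflatedBellman_fixpoint_general (map_lfpOf G.bellman_mono)
    fun T hT s hs => (hSEC T hT s hs).le
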